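/- Let G be a second-countable Lie group, let H = PSL(2,ℝ) × G, and let Γ be a discrete subgroup of H such that the quotient space Γ\H of left cosets is compact and the image of Γ under the projection H → G is dense in G (this density is equivalent to the minimality of the associated homogeneous G-Lie foliation). Then the foliated horocycle flow on Γ\H, given by right translation h_s(Γ(x,k)) = Γ(x·u(s), k), is strictly ergodic: every orbit is dense in Γ\H, and there is exactly one Borel probability measure on Γ\H invariant under this flow. -/

import Mathlib

/-!
Statement 0: For a second-countable Lie group `G`, `H = PSL(2,ℝ) × G` and a discrete
subgroup `Γ ≤ H` with compact quotient `Γ\H` and dense projection to `G`, the foliated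
horocycle flow `h_s(Γ(x,k)) = Γ(x·u(s),k)` on the right coset space `Γ\H` is strictly
ergodic: every orbit is dense, and there is exactly one invariant Borel probability
measure.
-/

open MeasureTheory QuotientGroup Matrix

abbrev SL2R := Matrix.SpecialLinearGroup (Fin 2) ℝ

noncomputable instance : TopologicalSpace SL2R :=
  inferInstanceAs (TopologicalSpace { A : Matrix (Fin 2) (Fin 2) ℝ // A.det = 1 })

/-- `PSL(2,ℝ)`, the quotient of `SL(2,ℝ)` by its center `{±I}`. -/
abbrev PSL2R := SL2R ⧸ Subgroup.center SL2R

/-- The unipotent element `u(s) = [[1,s],[0,1]]` of `SL(2,ℝ)`. -/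
noncomputable def uSL (s : ℝ) : SL2R :=
  ⟨!![1, s; 0, 1], by simp [Matrix.det_fin_two_of]⟩

/-- The class of `u(s)` in `PSL(2,ℝ)`. -/
noncomputable def uPSL (s : ℝ) : PSL2R := QuotientGroup.mk (uSL s)

/-- Right translation by `g` on the space `Γ\H` of right cosets `Γx`. -/
def rightMulQuot {H : Type*} [Group H] (Γ : Subgroup H) (g : H) :
    Quotient (QuotientGroup.rightRel Γ) → Quotient (QuotientGroup.rightRel Γ) :=
  Quotient.map (· * g) (fun a b hab => by
    have h : b * a⁻¹ ∈ Γ := QuotientGroup.rightRel_apply.mp hab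
    exact QuotientGroup.rightRel_apply.mpr (by simpa [mul_assoc] using h))

/-- The Borel σ-algebra on the coset space `Γ\H`. -/
noncomputable instance {H : Type*} [Group H] [TopologicalSpace H] (Γ : Subgroup H) :
    MeasurableSpace (Quotient (QuotientGroup.rightRel Γ)) := borel _

namespace Horocycle

open Filter Topology Set

section Matrices

/-- The lower triangular unipotent element `[[1,0],[c,1]]` of `SL(2,ℝ)`. -/
noncomputable def vSL (c : ℝ) : SL2R :=
  ⟨!![1, 0; c, 1], by simp [Matrix.det_fin_two_of]⟩

/-- The diagonal element `diag(e^{t/2}, e^{-t/2})` of `SL(2,ℝ)`. -/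
noncomputable def dSL (t : ℝ) : SL2R :=
  ⟨!![Real.exp (t / 2), 0; 0, Real.exp (-(t / 2))], by
    simp [Matrix.det_fin_two_of, ← Real.exp_add]⟩

/-- The lower triangular element `[[p,0],[q,p⁻¹]]` of `SL(2,ℝ)`. -/
noncomputable def lowerSL (p q : ℝ) (hp : p ≠ 0) : SL2R :=
  ⟨!![p, 0; q, p⁻¹], by simp [Matrix.det_fin_two_of, hp]⟩

lemma coe_uSL (s : ℝ) : (uSL s : Matrix (Fin 2) (Fin 2) ℝ) = !![1, s; 0, 1] := rfl

lemma coe_vSL (c : ℝ) : (vSL c : Matrix (Fin 2) (Fin 2) ℝ) = !![1, 0; c, 1] := rfl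

lemma coe_dSL (t : ℝ) : (dSL t : Matrix (Fin 2) (Fin 2) ℝ) =
    !![Real.exp (t / 2), 0; 0, Real.exp (-(t / 2))] := rfl

lemma coe_lowerSL (p q : ℝ) (hp : p ≠ 0) :
    (lowerSL p q hp : Matrix (Fin 2) (Fin 2) ℝ) = !![p, 0; q, p⁻¹] := rfl

lemma dSL_zero : dSL 0 = 1 := by
  ext i j; fin_cases i <;> fin_cases j <;> simp [coe_dSL]

lemma dSL_add (t s : ℝ) : dSL (t + s) = dSL t * dSL s := by
  ext i j
  fin_cases i <;> fin_cases j <;>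
    simp [coe_dSL, Matrix.mul_apply, Fin.sum_univ_two, ← Real.exp_add] <;> ring_nf

lemma uSL_zero : uSL 0 = 1 := by
  ext i j; fin_cases i <;> fin_cases j <;> simp [coe_uSL]

lemma uSL_add (s r : ℝ) : uSL (s + r) = uSL s * uSL r := by
  ext i j
  fin_cases i <;> fin_cases j <;>
    simp [coe_uSL, Matrix.mul_apply, Fin.sum_univ_two, add_comm]

lemma uSL_neg (s : ℝ) : uSL (-s) = (uSL s)⁻¹ :=
  eq_inv_of_mul_eq_one_left (by rw [← uSL_add, neg_add_cancel, uSL_zero])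

lemma vSL_zero : vSL 0 = 1 := by
  ext i j; fin_cases i <;> fin_cases j <;> simp [coe_vSL]

lemma dSL_mul_uSL (t s : ℝ) : dSL t * uSL s = uSL (Real.exp t * s) * dSL t := by
  have h : Real.exp (t / 2) = Real.exp t * Real.exp (-(t / 2)) := by
    rw [← Real.exp_add]; ring_nf
  ext i j
  fin_cases i <;> fin_cases j <;>
    simp [coe_uSL, coe_dSL, Matrix.mul_apply, Fin.sum_univ_two]
  rw [h]; ring

lemma dSL_mul_vSL (t c : ℝ) : dSL t * vSL c = vSL (Real.exp (-t) * c) * dSL t := by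
  have h : Real.exp (-(t / 2)) = Real.exp (-t) * Real.exp (t / 2) := by
    rw [← Real.exp_add]; ring_nf
  ext i j
  fin_cases i <;> fin_cases j <;>
    simp [coe_vSL, coe_dSL, Matrix.mul_apply, Fin.sum_univ_two]
  rw [h]; ring

/-- Pushing a general element through the flow `u`, up to a lower triangular factor. -/
lemma dSL_mul_uSL_mul (t s : ℝ) (g : SL2R) (hp : g 0 0 + s * g 1 0 ≠ 0) :
    dSL t * (uSL s * g) =
      lowerSL (g 0 0 + s * g 1 0) (Real.exp (-t) * g 1 0) hp *
        (dSL t * uSL ((g 0 1 + s * g 1 1) / (g 0 0 + s * g 1 0))) := by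
  have hdet : g 0 0 * g 1 1 - g 0 1 * g 1 0 = 1 := by
    have := g.det_coe
    rwa [Matrix.det_fin_two] at this
  have h : Real.exp (-(t / 2)) = Real.exp (-t) * Real.exp (t / 2) := by
    rw [← Real.exp_add]; ring_nf
  ext i j
  fin_cases i <;> fin_cases j <;>
    simp [coe_uSL, coe_dSL, coe_lowerSL, Matrix.vecMul, dotProduct, Fin.sum_univ_two]
  · ring
  · field_simp
  · rw [h]; ring
  · rw [h]
    generalize hpe : (g : Matrix (Fin 2) (Fin 2) ℝ) 0 0 + s * g 1 0 = p at *
    field_simp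
    linear_combination hdet - g 1 1 * hpe

/-- The group `SL(2,ℝ)` is generated by its two standard unipotent subgroups. -/
lemma unipotent_induction (P : SL2R → Prop) (hu : ∀ s, P (uSL s)) (hv : ∀ c, P (vSL c))
    (hmul : ∀ A B, P A → P B → P (A * B)) (A : SL2R) : P A := by
  refine Matrix.SL2.transvection_induction P (fun i j h c => ?_) hmul A
  fin_cases i
  · obtain rfl : j = 1 := by fin_cases j <;> tauto
    convert hu c
    ext i j; fin_cases i <;> fin_cases j <;> simp [coe_uSL, SpecialLinearGroup.transvection_coe]
  · obtain rfl : j = 0 := by fin_cases j <;> tauto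
    convert hv c
    ext i j; fin_cases i <;> fin_cases j <;> simp [coe_vSL, SpecialLinearGroup.transvection_coe]

lemma continuous_SL2R_iff {Y : Type*} [TopologicalSpace Y] {f : Y → SL2R} :
    Continuous f ↔ ∀ i j, Continuous fun y => f y i j := by
  have h : Continuous f ↔ Continuous fun y => (fun i j => f y i j : Fin 2 → Fin 2 → ℝ) :=
    continuous_induced_rng
  simp_rw [h, continuous_pi_iff]

lemma continuous_SL2R_apply (i j : Fin 2) : Continuous fun g : SL2R => g i j :=
  continuous_SL2R_iff.1 continuous_id i j

lemma continuous_uSL : Continuous uSL := by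
  refine continuous_SL2R_iff.2 fun i j => ?_
  fin_cases i <;> fin_cases j <;> simp [coe_uSL] <;> fun_prop

lemma continuous_vSL : Continuous vSL := by
  refine continuous_SL2R_iff.2 fun i j => ?_
  fin_cases i <;> fin_cases j <;> simp [coe_vSL] <;> fun_prop

lemma eventually_SL2R_near_one {δ : ℝ} (hδ : 0 < δ) :
    ∀ᶠ g : SL2R in 𝓝 1, |g 0 0 - 1| < δ ∧ |g 0 1| < δ ∧ |g 1 0| < δ ∧ |g 1 1 - 1| < δ := by
  have key (i j : Fin 2) : ∀ᶠ g : SL2R in 𝓝 1, |g i j - (1 : SL2R) i j| < δ :=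
    Metric.tendsto_nhds.1 ((continuous_SL2R_apply i j).tendsto 1) δ hδ
  filter_upwards [key 0 0, key 0 1, key 1 0, key 1 1] with g h1 h2 h3 h4
  simp at h1 h2 h3 h4
  exact ⟨h1, h2, h3, h4⟩

lemma exists_SL2R_near_one_subset {W : Set SL2R} (hW : W ∈ 𝓝 1) :
    ∃ η > 0, ∀ g : SL2R, |g 0 0 - 1| < η → |g 0 1| < η → |g 1 0| < η → |g 1 1 - 1| < η →
      g ∈ W := by
  have : 𝓝 (1 : SL2R) = comap (fun g : SL2R => (fun i j => g i j : Fin 2 → Fin 2 → ℝ))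
      (𝓝 (fun i j => (1 : SL2R) i j)) := nhds_induced _ _
  rw [this, mem_comap] at hW
  obtain ⟨V, hV, hVW⟩ := hW
  obtain ⟨η, hη, hball⟩ := Metric.mem_nhds_iff.1 hV
  refine ⟨η, hη, fun g h1 h2 h3 h4 => hVW (hball ?_)⟩
  rw [Metric.mem_ball, dist_pi_lt_iff hη]
  intro i
  rw [dist_pi_lt_iff hη]
  intro j
  rw [Real.dist_eq]
  fin_cases i <;> fin_cases j <;> simpa

end Matrices

section Averages

/-- Averages of a bounded function along two close parametrizations of the unit interval
are close. -/
lemma abs_integral_comp_sub_integral_le {φ σ ρ : ℝ → ℝ} {C η : ℝ} (hφ : Continuous φ)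
    (hC : ∀ s, |φ s| ≤ C)
    (hσ : ∀ s ∈ Icc (0 : ℝ) 1, HasDerivAt σ (ρ s) s) (hρ : ContinuousOn ρ (Icc 0 1))
    (hρ1 : ∀ s ∈ Icc (0 : ℝ) 1, |1 - ρ s| ≤ η) (h0 : |σ 0| ≤ η) (h1 : |σ 1 - 1| ≤ η) :
    |(∫ s in (0 : ℝ)..1, φ (σ s)) - ∫ s in (0 : ℝ)..1, φ s| ≤ 3 * (C * η) := by
  have hC0 : 0 ≤ C := (abs_nonneg _).trans (hC 0)
  have hI : uIcc (0 : ℝ) 1 = Icc 0 1 := uIcc_of_le zero_le_one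
  have hσc : ContinuousOn σ (Icc 0 1) := fun s hs => (hσ s hs).continuousAt.continuousWithinAt
  have hint1 : IntervalIntegrable (fun s => φ (σ s)) volume 0 1 :=
    (ContinuousOn.intervalIntegrable (by rw [hI]; exact hφ.comp_continuousOn hσc))
  have hint2 : IntervalIntegrable (fun s => φ (σ s) * ρ s) volume 0 1 :=
    (ContinuousOn.intervalIntegrable (by rw [hI]; exact (hφ.comp_continuousOn hσc).mul hρ))
  have hsub : ∫ s in (0 : ℝ)..1, φ (σ s) * ρ s = ∫ s in σ 0..σ 1, φ s :=
    intervalIntegral.integral_comp_mul_deriv (by rwa [hI]) (by rwa [hI]) hφ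
  have e1 : |(∫ s in (0 : ℝ)..1, φ (σ s)) - ∫ s in (0 : ℝ)..1, φ (σ s) * ρ s| ≤ C * η := by
    rw [← intervalIntegral.integral_sub hint1 hint2]
    have := intervalIntegral.norm_integral_le_of_norm_le_const (a := (0 : ℝ)) (b := 1)
      (C := C * η) (f := fun s => φ (σ s) - φ (σ s) * ρ s) (fun s hs => by
        rw [uIoc_of_le zero_le_one] at hs
        have : φ (σ s) - φ (σ s) * ρ s = φ (σ s) * (1 - ρ s) := by ring
        rw [this, Real.norm_eq_abs, abs_mul]
        exact mul_le_mul (hC _) (hρ1 s ⟨hs.1.le, hs.2⟩) (abs_nonneg _) hC0)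
    simpa using this
  have bd (a b : ℝ) (hab : |b - a| ≤ η) : |∫ s in a..b, φ s| ≤ C * η :=
    (intervalIntegral.norm_integral_le_of_norm_le_const (f := φ) (fun s _ => hC s)).trans
      (mul_le_mul_of_nonneg_left hab hC0)
  have e2 : (∫ s in σ 0..σ 1, φ s) - ∫ s in (0 : ℝ)..1, φ s =
      (∫ s in σ 0..0, φ s) + ∫ s in (1 : ℝ)..σ 1, φ s := by
    have a1 := intervalIntegral.integral_add_adjacent_intervals
      (hφ.intervalIntegrable (μ := volume) (σ 0) 0) (hφ.intervalIntegrable (μ := volume) 0 1)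
    have a2 := intervalIntegral.integral_add_adjacent_intervals
      (hφ.intervalIntegrable (μ := volume) (σ 0) 1) (hφ.intervalIntegrable (μ := volume) 1 (σ 1))
    linarith
  have e3 := bd (σ 0) 0 (by simpa using h0)
  have e4 := bd 1 (σ 1) h1
  rw [← hsub] at e2
  rw [abs_le] at *
  constructor <;> linarith

lemma exists_forall_abs_le {X : Type*} [TopologicalSpace X] [CompactSpace X] {f : X → ℝ}
    (hf : Continuous f) : ∃ C, ∀ x, |f x| ≤ C := by
  obtain ⟨C, hC⟩ := (isCompact_range hf).isBounded.exists_norm_le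
  exact ⟨C, fun x => hC _ (mem_range_self x)⟩

/-- A continuous function on a compact space is uniformly continuous along a continuous action. -/
lemma eventually_forall_abs_smul_sub_lt {X K : Type*} [TopologicalSpace X]
    [CompactSpace X] [TopologicalSpace K] [Group K] [MulAction K X]
    [ContinuousSMul K X] {f : X → ℝ} (hf : Continuous f) {ε : ℝ} (hε : 0 < ε) :
    ∀ᶠ k : K in 𝓝 1, ∀ x, |f (k • x) - f x| < ε := by
  have h := (isCompact_univ (X := X)).eventually_forall_of_forall_eventually (x₀ := (1 : K))
    (P := fun k x => |f (k • x) - f x| < ε) (fun x _ => by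
      have hc : Continuous fun z : K × X => |f (z.1 • z.2) - f z.2| := by fun_prop
      exact (hc.tendsto (1, x)).eventually_lt_const (by simpa))
  simpa using h

variable {X : Type*} [MulAction SL2R X]

/-- The average of `f` over the geodesic image at time `t` of a horocycle arc of unit length. -/
noncomputable def arcAverage (f : X → ℝ) (t : ℝ) (x : X) : ℝ :=
  ∫ s in (0 : ℝ)..1, f (dSL t • uSL s • x)

lemma abs_arcAverage_le {f : X → ℝ} {C : ℝ} (hC : ∀ x, |f x| ≤ C) (t : ℝ) (x : X) :
    |arcAverage f t x| ≤ C := by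
  have := intervalIntegral.norm_integral_le_of_norm_le_const (a := (0 : ℝ)) (b := 1) (C := C)
    (f := fun s => f (dSL t • uSL s • x)) (fun s _ => hC _)
  simpa [arcAverage] using this

lemma arcAverage_eq (f : X → ℝ) (t : ℝ) (x : X) :
    arcAverage f t x = ∫ s in (0 : ℝ)..1, f (uSL (Real.exp t * s) • dSL t • x) := by
  simp only [arcAverage, ← mul_smul, dSL_mul_uSL]

variable [TopologicalSpace X] [ContinuousSMul SL2R X]

lemma continuous_arc {f : X → ℝ} (hf : Continuous f) (t : ℝ) (x : X) :
    Continuous fun s : ℝ => f (dSL t • uSL s • x) := by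
  have := continuous_uSL
  fun_prop

lemma continuous_arcAverage {f : X → ℝ} (hf : Continuous f) (t : ℝ) :
    Continuous (arcAverage f t) := by
  have := continuous_uSL
  refine intervalIntegral.continuous_parametric_intervalIntegral_of_continuous' ?_ 0 1
  simp only [Function.uncurry_def]
  fun_prop

/-- Doubling the length of the arc. -/
lemma arcAverage_add_log_two {f : X → ℝ} (hf : Continuous f) (t : ℝ) (x : X) :
    arcAverage f (t + Real.log 2) x =
      (arcAverage f t (dSL (Real.log 2) • x) +
        arcAverage f t (uSL 1 • dSL (Real.log 2) • x)) / 2 := by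
  set φ : ℝ → ℝ := fun s => f (dSL t • uSL s • dSL (Real.log 2) • x) with hφ
  have hφc : Continuous φ := continuous_arc hf t _
  have h1 : arcAverage f (t + Real.log 2) x = ∫ s in (0 : ℝ)..1, φ (2 * s) := by
    unfold arcAverage
    congr 1; ext s
    have : dSL (t + Real.log 2) * uSL s = dSL t * uSL (2 * s) * dSL (Real.log 2) := by
      rw [dSL_add, mul_assoc, dSL_mul_uSL, Real.exp_log two_pos, mul_assoc]
    rw [hφ]
    simp only [← mul_smul, this, mul_assoc]
  have h2 : arcAverage f t (uSL 1 • dSL (Real.log 2) • x) = ∫ s in (0 : ℝ)..1, φ (s + 1) := by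
    unfold arcAverage
    congr 1; ext s
    simp only [hφ, uSL_add, mul_smul]
  have h3 : arcAverage f t (dSL (Real.log 2) • x) = ∫ s in (0 : ℝ)..1, φ s := rfl
  rw [h1, h2, h3, intervalIntegral.integral_comp_mul_left φ two_ne_zero,
    intervalIntegral.integral_comp_add_right φ]
  norm_num
  rw [intervalIntegral.integral_add_adjacent_intervals (hφc.intervalIntegrable _ _)
    (hφc.intervalIntegrable _ _)]
  ring

variable [CompactSpace X]

/-- The arc averages at nonnegative times vary little under translation by elements of
`SL(2,ℝ)` close to the identity, uniformly in time. -/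
lemma eventually_abs_arcAverage_smul_sub_le {f : X → ℝ} (hf : Continuous f) {ε : ℝ}
    (hε : 0 < ε) :
    ∀ᶠ g : SL2R in 𝓝 1, ∀ t : ℝ, 0 ≤ t → ∀ x,
      |arcAverage f t (g • x) - arcAverage f t x| ≤ ε := by
  obtain ⟨C, hC⟩ := exists_forall_abs_le hf
  obtain ⟨η, hη, hW⟩ := exists_SL2R_near_one_subset
    (eventually_forall_abs_smul_sub_lt (K := SL2R) hf (half_pos hε))
  set C' := max C 1
  have h_one_le : 1 ≤ C' := le_max_right _ _
  have hC' : ∀ x, |f x| ≤ C' := fun x => (hC x).trans (le_max_left _ _)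
  set δ := min (1 / 16) (min (η / 8) (ε / (C' * 128)))
  have hδ : 0 < δ := by positivity
  have hδ1 : δ ≤ 1 / 16 := min_le_left _ _
  have hδ2 : δ ≤ η / 8 := (min_le_right _ _).trans (min_le_left _ _)
  have hδ3 : δ * (C' * 128) ≤ ε := by
    rw [← le_div_iff₀ (by positivity)]
    exact (min_le_right _ _).trans (min_le_right _ _)
  filter_upwards [eventually_SL2R_near_one hδ] with g ⟨ha, hb, hc, hd⟩ t ht x
  have hdet : g 0 0 * g 1 1 - g 0 1 * g 1 0 = 1 := by
    have := g.det_coe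
    rwa [Matrix.det_fin_two] at this
  generalize haa : g 0 0 = a at *
  generalize hbb : g 0 1 = b at *
  generalize hcc : g 1 0 = c at *
  generalize hdd : g 1 1 = d at *
  have hp (s : ℝ) (hs : s ∈ Icc (0 : ℝ) 1) : |(a + s * c) - 1| ≤ 2 * δ := by
    rw [abs_lt] at ha hc
    rw [abs_le]
    constructor <;> nlinarith [hs.1, hs.2]
  have hp0 (s : ℝ) (hs : s ∈ Icc (0 : ℝ) 1) : 7 / 8 ≤ a + s * c := by
    have := (abs_le.1 (hp s hs)).1
    linarith
  have hinv (p y κ : ℝ) (hp : 7 / 8 ≤ p) (hy : |y - p| ≤ κ) : |y / p - 1| ≤ 2 * κ := by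
    rw [div_sub_one (by positivity), abs_div, div_le_iff₀ (by positivity),
      abs_of_pos (by positivity : 0 < p)]
    nlinarith [abs_nonneg (y - p)]
  set φ : ℝ → ℝ := fun s => f (dSL t • uSL s • x) with hφ
  set σ : ℝ → ℝ := fun s => (b + s * d) / (a + s * c) with hσ
  have hmain : |(∫ s in (0 : ℝ)..1, φ (σ s)) - ∫ s in (0 : ℝ)..1, φ s| ≤
      3 * (C' * (16 * δ)) := by
    refine abs_integral_comp_sub_integral_le (ρ := fun s => 1 / (a + s * c) ^ 2)
      (continuous_arc hf t x) (fun s => hC' _) (fun s hs => ?_) ?_ (fun s hs => ?_) ?_ ?_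
    · have hne : a + s * c ≠ 0 := by have := hp0 s hs; positivity
      have h1 : HasDerivAt (fun s : ℝ => b + s * d) d s := by
        simpa using ((hasDerivAt_id s).mul_const d).const_add b
      have h2 : HasDerivAt (fun s : ℝ => a + s * c) c s := by
        simpa using ((hasDerivAt_id s).mul_const c).const_add a
      refine (h1.div h2 hne).congr_deriv ?_
      congr 1
      linear_combination hdet
    · refine ContinuousOn.div (by fun_prop) (by fun_prop) fun s hs => ?_
      have := hp0 s hs; positivity
    · have h1 := hp s hs
      have h2 := hp0 s hs
      have h3 := hinv (a + s * c) 1 (2 * δ) h2 (by rwa [abs_sub_comm])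
      have h4 : 1 - 1 / (a + s * c) ^ 2 =
          -((1 / (a + s * c) - 1) * (1 / (a + s * c) - 1 + 2)) := by
        field_simp; ring
      rw [h4, abs_neg, abs_mul]
      have h5 : |1 / (a + s * c) - 1 + 2| ≤ 4 := by
        rw [abs_le] at h3 ⊢
        constructor <;> linarith
      calc _ ≤ (2 * (2 * δ)) * 4 := mul_le_mul h3 h5 (abs_nonneg _) (by positivity)
        _ = 16 * δ := by ring
    · have h0 := hp0 0 (by simp)
      simp only [zero_mul, add_zero] at h0
      simp only [hσ, zero_mul, add_zero]
      rw [abs_div, div_le_iff₀ (by positivity), abs_of_pos (by positivity : 0 < a)]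
      nlinarith
    · have h1 := hp0 1 (by simp)
      have := hinv (a + 1 * c) (b + 1 * d) (4 * δ) h1 (by
        rw [abs_lt] at ha hb hc hd
        rw [abs_le]
        constructor <;> linarith)
      exact this.trans (by linarith)
  have hclose : ∀ s ∈ Icc (0 : ℝ) 1, |f (dSL t • uSL s • g • x) - φ (σ s)| ≤ ε / 2 := by
    intro s hs
    have hpos := hp0 s hs
    have hne : a + s * c ≠ 0 := by positivity
    have hmat : dSL t • uSL s • g • x =
        lowerSL (a + s * c) (Real.exp (-t) * c) hne • dSL t • uSL (σ s) • x := by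
      have := dSL_mul_uSL_mul t s g (by rwa [haa, hcc])
      simp only [haa, hbb, hcc, hdd] at this
      simp only [← mul_smul, this, hσ]
    rw [hmat]
    refine (hW _ ?_ ?_ ?_ ?_ _).le
    · simp only [coe_lowerSL]
      simpa using (hp s hs).trans_lt (by linarith)
    · simpa [coe_lowerSL] using hη
    · have : Real.exp (-t) ≤ 1 := by simpa using ht
      simp only [coe_lowerSL, Matrix.of_apply, Matrix.cons_val', Matrix.cons_val_zero,
        Matrix.cons_val_one, Matrix.cons_val_fin_one]
      rw [abs_mul, abs_of_pos (Real.exp_pos _)]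
      nlinarith [abs_nonneg c, Real.exp_pos (-t)]
    · have := hinv (a + s * c) 1 (2 * δ) hpos (by rw [abs_sub_comm]; exact hp s hs)
      simp only [coe_lowerSL]
      simpa using this.trans_lt (by linarith)
  have hfirst : |arcAverage f t (g • x) - ∫ s in (0 : ℝ)..1, φ (σ s)| ≤ ε / 2 := by
    have hσc : ContinuousOn σ (Icc 0 1) := by
      refine ContinuousOn.div (by fun_prop) (by fun_prop) fun s hs => ?_
      have := hp0 s hs; positivity
    have hint : IntervalIntegrable (fun s => φ (σ s)) volume 0 1 :=
      ContinuousOn.intervalIntegrable (by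
        rw [uIcc_of_le zero_le_one]; exact (continuous_arc hf t x).comp_continuousOn hσc)
    rw [arcAverage, ← intervalIntegral.integral_sub
      ((continuous_arc hf t _).intervalIntegrable _ _) hint]
    have := intervalIntegral.norm_integral_le_of_norm_le_const (a := (0 : ℝ)) (b := 1)
      (C := ε / 2) (f := fun s => f (dSL t • uSL s • g • x) - φ (σ s)) (fun s hs => by
        rw [uIoc_of_le zero_le_one] at hs
        exact hclose s ⟨hs.1.le, hs.2⟩)
    simpa using this
  have hsecond : arcAverage f t x = ∫ s in (0 : ℝ)..1, φ s := rfl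
  rw [hsecond]
  have := abs_sub_le (arcAverage f t (g • x)) (∫ s in (0 : ℝ)..1, φ (σ s))
    (∫ s in (0 : ℝ)..1, φ s)
  linarith

end Averages

section Ergodicity

instance : IsTopologicalGroup SL2R :=
  Matrix.SpecialLinearGroup.topologicalGroup

instance : SecondCountableTopology SL2R :=
  haveI : SecondCountableTopology (Matrix (Fin 2) (Fin 2) ℝ) :=
    inferInstanceAs (SecondCountableTopology (Fin 2 → Fin 2 → ℝ))
  TopologicalSpace.Subtype.secondCountableTopology
    {A : Matrix (Fin 2) (Fin 2) ℝ | A.det = 1}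

lemma integrable_of_continuous {X : Type*} [TopologicalSpace X] [CompactSpace X]
    [MeasurableSpace X] [BorelSpace X] (μ : Measure X) [IsFiniteMeasure μ] {F : X → ℝ}
    (hF : Continuous F) : Integrable F μ :=
  hF.integrable_of_hasCompactSupport (HasCompactSupport.of_compactSpace F)

variable {X : Type*} [MeasurableSpace X] [MulAction SL2R X] (μ : Measure X)

/-- The squared `L²`-distance between a function and its translate. -/
noncomputable def displacement (F : X → ℝ) (g : SL2R) : ℝ := ∫ x, (F (g • x) - F x) ^ 2 ∂μ

lemma displacement_one (F : X → ℝ) : displacement μ F 1 = 0 := by simp [displacement]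

lemma displacement_mul_left {F : X → ℝ} {h : SL2R} (hh : ∀ x, F (h • x) = F x) (g : SL2R) :
    displacement μ F (h * g) = displacement μ F g := by
  simp only [displacement, mul_smul, hh]

lemma displacement_mul_right [MeasurableConstSMul SL2R X] [SMulInvariantMeasure SL2R X μ]
    {F : X → ℝ} {h : SL2R} (hh : ∀ x, F (h • x) = F x) (g : SL2R) :
    displacement μ F (g * h) = displacement μ F g := by
  have := integral_smul_eq_self (μ := μ) (fun x => (F (g • x) - F x) ^ 2) (g := h)
  simp only [displacement, mul_smul]
  rw [← this]
  simp only [hh]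

lemma uSL_mul_vSL_mul_uSL {k : ℝ} (hk : k ≠ 0) :
    uSL (2 * k) * vSL (1 / (2 * k)) * uSL (-k) = lowerSL 2 (1 / (2 * k)) two_ne_zero := by
  ext i j
  fin_cases i <;> fin_cases j <;>
    simp [coe_uSL, coe_vSL, coe_lowerSL] <;> field_simp <;> norm_num

lemma lowerSL_two_zero : lowerSL 2 0 two_ne_zero = dSL (2 * Real.log 2) := by
  ext i j
  fin_cases i <;> fin_cases j <;>
    simp [coe_lowerSL, coe_dSL, Real.exp_neg, Real.exp_log]

variable [TopologicalSpace X] [CompactSpace X] [BorelSpace X] [ContinuousSMul SL2R X]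
  [IsFiniteMeasure μ]

lemma continuous_displacement {F : X → ℝ} (hF : Continuous F) :
    Continuous (displacement μ F) := by
  obtain ⟨C, hC⟩ := exists_forall_abs_le hF
  refine continuous_of_dominated (bound := fun _ => (2 * C) ^ 2) (fun g => ?_) (fun g => ?_)
    (integrable_const _) ?_
  · have : Continuous fun x => (F (g • x) - F x) ^ 2 := by fun_prop
    exact this.aestronglyMeasurable
  · refine Eventually.of_forall fun x => ?_
    rw [norm_pow]
    gcongr
    have := abs_sub (F (g • x)) (F x)
    rw [Real.norm_eq_abs]
    linarith [hC x, hC (g • x)]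
  · refine Eventually.of_forall fun x => ?_
    fun_prop

lemma eq_of_displacement_eq_zero [μ.IsOpenPosMeasure] {F : X → ℝ} (hF : Continuous F) {g : SL2R}
    (hg : displacement μ F g = 0) (x : X) : F (g • x) = F x := by
  have hc : Continuous fun x => (F (g • x) - F x) ^ 2 := by fun_prop
  have h0 := (integral_eq_zero_iff_of_nonneg (fun x => sq_nonneg _)
    (integrable_of_continuous μ hc)).1 hg
  have h1 := (hc.ae_eq_iff_eq μ continuous_zero).1 h0
  have h2 := congrFun h1 x
  simp only [Pi.zero_apply, ne_eq, OfNat.ofNat_ne_zero, not_false_eq_true, pow_eq_zero_iff] at h2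
  linarith

variable [SMulInvariantMeasure SL2R X μ]

/-- Mautner phenomenon: a continuous function invariant under the time-one map of the horocycle
flow is invariant under `SL(2,ℝ)`. -/
lemma invariant_of_uSL_one_invariant [μ.IsOpenPosMeasure] {F : X → ℝ} (hF : Continuous F)
    (h1 : ∀ x, F (uSL 1 • x) = F x) (g : SL2R) (x : X) : F (g • x) = F x := by
  have hψ := continuous_displacement μ hF
  have hu (n : ℕ) (x : X) : F (uSL n • x) = F x := by
    induction n generalizing x with
    | zero => simp [uSL_zero]
    | succ n ih => rw [Nat.cast_succ, uSL_add, mul_smul, ih, h1]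
  have hu' (n : ℕ) (x : X) : F (uSL (-n) • x) = F x := by
    rw [← hu n (uSL (-n) • x), ← mul_smul, ← uSL_add]
    simp [uSL_zero]
  have hd : ∀ x, F (dSL (2 * Real.log 2) • x) = F x := by
    refine eq_of_displacement_eq_zero μ hF ?_
    have hlim : Tendsto (fun k : ℕ => 1 / (2 * ((k : ℝ) + 1))) atTop (𝓝 0) := by
      have := (tendsto_one_div_add_atTop_nhds_zero_nat (𝕜 := ℝ)).const_mul (1 / 2)
      simp only [mul_zero] at this
      refine this.congr fun k => ?_
      field_simp
    have hcl : Continuous fun q : ℝ => lowerSL 2 q two_ne_zero := by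
      refine continuous_SL2R_iff.2 fun i j => ?_
      fin_cases i <;> fin_cases j <;> simp [coe_lowerSL] <;> fun_prop
    have t1 := ((hψ.comp hcl).tendsto 0).comp hlim
    have t2 := ((hψ.comp continuous_vSL).tendsto 0).comp hlim
    simp only [Function.comp_def, vSL_zero, displacement_one, lowerSL_two_zero] at t1 t2
    refine tendsto_nhds_unique t1 (t2.congr fun k => ?_)
    have e1 := displacement_mul_right μ (hu' (k + 1))
      (uSL (2 * ((k : ℝ) + 1)) * vSL (1 / (2 * ((k : ℝ) + 1))))
    have e2 := displacement_mul_left μ (hu (2 * (k + 1))) (vSL (1 / (2 * ((k : ℝ) + 1))))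
    push_cast at e1 e2
    rw [← e2, ← e1, uSL_mul_vSL_mul_uSL (by positivity)]
  have hdn (n : ℕ) (x : X) : F (dSL (n * (2 * Real.log 2)) • x) = F x := by
    induction n generalizing x with
    | zero => simp [dSL_zero]
    | succ n ih => rw [Nat.cast_succ, add_mul, one_mul, dSL_add, mul_smul, ih, hd]
  have hdn' (n : ℕ) (x : X) : F (dSL (-(n * (2 * Real.log 2))) • x) = F x := by
    rw [← hdn n (dSL (-(n * (2 * Real.log 2))) • x), ← mul_smul, ← dSL_add]
    simp [dSL_zero]
  have hexp (c : ℝ) :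
      Tendsto (fun n : ℕ => Real.exp (-(n * (2 * Real.log 2))) * c) atTop (𝓝 0) := by
    have hL : 0 < 2 * Real.log 2 := by have := Real.log_pos one_lt_two; positivity
    have := (Real.tendsto_exp_neg_atTop_nhds_zero.comp
      (tendsto_natCast_atTop_atTop.atTop_mul_const hL)).mul_const c
    simpa using this
  refine unipotent_induction (fun g => ∀ x, F (g • x) = F x) (fun s => ?_) (fun c => ?_)
    (fun A B hA hB x => by rw [mul_smul, hA, hB]) g x
  · refine eq_of_displacement_eq_zero μ hF ?_
    have t := ((hψ.comp continuous_uSL).tendsto 0).comp (hexp s)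
    simp only [Function.comp_def, uSL_zero, displacement_one] at t
    refine tendsto_nhds_unique (tendsto_const_nhds.congr fun n => ?_) t
    rw [← displacement_mul_left μ (hdn' n), dSL_mul_uSL, displacement_mul_right μ (hdn' n)]
  · refine eq_of_displacement_eq_zero μ hF ?_
    have t := ((hψ.comp continuous_vSL).tendsto 0).comp (hexp c)
    simp only [Function.comp_def, vSL_zero, displacement_one] at t
    refine tendsto_nhds_unique (tendsto_const_nhds.congr fun n => ?_) t
    rw [← displacement_mul_left μ (hdn n), dSL_mul_vSL, displacement_mul_right μ (hdn n)]

end Ergodicity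

section Convergence

variable {X : Type*} [TopologicalSpace X] [MulAction SL2R X] [ContinuousSMul SL2R X]

lemma abs_arcAverage_smul_sub_le {K : Type*} [SMul K X] [ContinuousConstSMul K X]
    [SMulCommClass SL2R K X]
    {f : X → ℝ} (hf : Continuous f) {k : K} {ε : ℝ} (hk : ∀ x, |f (k • x) - f x| ≤ ε)
    (t : ℝ) (x : X) : |arcAverage f t (k • x) - arcAverage f t x| ≤ ε := by
  rw [arcAverage, arcAverage, ← intervalIntegral.integral_sub
    ((continuous_arc hf t _).intervalIntegrable _ _)
    ((continuous_arc hf t _).intervalIntegrable _ _)]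
  have := intervalIntegral.norm_integral_le_of_norm_le_const (a := (0 : ℝ)) (b := 1) (C := ε)
    (f := fun s => f (dSL t • uSL s • k • x) - f (dSL t • uSL s • x)) (fun s _ => by
      rw [smul_comm (uSL s) k, smul_comm (dSL t) k]
      exact hk _)
  simpa using this

variable [CompactSpace X]

/-- The arc averages at nonnegative times form an equicontinuous family, as soon as the action of
`SL(2,ℝ)` together with a commuting action is locally open. -/
lemma equicontinuous_arcAverage {K : Type*} [TopologicalSpace K] [Group K] [MulAction K X]
    [ContinuousSMul K X] [SMulCommClass SL2R K X]
    (hopen : ∀ x : X, ∀ W ∈ 𝓝 (1 : SL2R), ∀ V ∈ 𝓝 (1 : K),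
      {y | ∃ g ∈ W, ∃ k ∈ V, y = g • k • x} ∈ 𝓝 x)
    {f : X → ℝ} (hf : Continuous f) {ι : Type*} {τ : ι → ℝ} (hτ : ∀ i, 0 ≤ τ i) :
    Equicontinuous fun i => arcAverage f (τ i) := by
  intro x
  rw [Metric.equicontinuousAt_iff_right]
  intro ε hε
  filter_upwards [hopen x _ (eventually_abs_arcAverage_smul_sub_le hf (half_pos hε)) _
    (eventually_forall_abs_smul_sub_lt (K := K) hf (half_pos (half_pos hε)))]
  rintro _ ⟨g, hg, k, hk, rfl⟩ i
  have h1 := hg (τ i) (hτ i) (k • x)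
  have h2 := abs_arcAverage_smul_sub_le hf (fun x => (hk x).le) (τ i) x
  rw [Real.dist_eq]
  rw [abs_le] at h1 h2
  rw [abs_lt]
  constructor <;> linarith

variable [MeasurableSpace X] [BorelSpace X]

lemma integral_arcAverage_sq_add (μ : Measure X) [IsFiniteMeasure μ]
    [SMulInvariantMeasure SL2R X μ] {f : X → ℝ} (hf : Continuous f) (t : ℝ) :
    ∫ x, arcAverage f (t + Real.log 2) x ^ 2 ∂μ =
      ∫ x, arcAverage f t x ^ 2 ∂μ - displacement μ (arcAverage f t) (uSL 1) / 4 := by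
  set A := arcAverage f t with hA
  have hAc : Continuous A := continuous_arcAverage hf t
  have hAu : Continuous fun x => A (uSL 1 • x) := by fun_prop
  have h1 : ∫ x, arcAverage f (t + Real.log 2) x ^ 2 ∂μ =
      ∫ x, ((A x + A (uSL 1 • x)) / 2) ^ 2 ∂μ := by
    rw [← integral_smul_eq_self (μ := μ) (fun x => ((A x + A (uSL 1 • x)) / 2) ^ 2)
      (g := dSL (Real.log 2))]
    simp only [arcAverage_add_log_two hf, hA]
  have h2 : ∫ x, A (uSL 1 • x) ^ 2 ∂μ = ∫ x, A x ^ 2 ∂μ :=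
    integral_smul_eq_self (μ := μ) (fun x => A x ^ 2) (g := uSL 1)
  have i1 : Integrable (fun x => A x ^ 2) μ := integrable_of_continuous μ (hAc.pow 2)
  have i2 : Integrable (fun x => A (uSL 1 • x) ^ 2) μ := integrable_of_continuous μ (hAu.pow 2)
  have i12 : Integrable (fun x => A x ^ 2 + A (uSL 1 • x) ^ 2) μ := i1.add i2
  have i3 : Integrable (fun x => (A (uSL 1 • x) - A x) ^ 2) μ :=
    integrable_of_continuous μ ((hAu.sub hAc).pow 2)
  have h3 : ∀ x, ((A x + A (uSL 1 • x)) / 2) ^ 2 =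
      ((A x ^ 2 + A (uSL 1 • x) ^ 2) / 2) - (A (uSL 1 • x) - A x) ^ 2 / 4 := fun x => by ring
  rw [h1, displacement]
  simp only [h3]
  rw [integral_sub (i12.div_const 2) (i3.div_const 4), integral_div, integral_div,
    integral_add i1 i2, h2]
  ring

/-- Along the doubling times, the arc averages become asymptotically invariant in `L²` under the
time-one map of the horocycle flow. -/
lemma tendsto_displacement_arcAverage (μ : Measure X) [IsFiniteMeasure μ]
    [SMulInvariantMeasure SL2R X μ] {f : X → ℝ} (hf : Continuous f) :
    Tendsto (fun j : ℕ => displacement μ (arcAverage f (j * Real.log 2)) (uSL 1)) atTop (𝓝 0) := by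
  set I : ℕ → ℝ := fun j => ∫ x, arcAverage f (j * Real.log 2) x ^ 2 ∂μ with hI
  have hstep (j : ℕ) :
      displacement μ (arcAverage f (j * Real.log 2)) (uSL 1) = 4 * (I j - I (j + 1)) := by
    have := integral_arcAverage_sq_add μ hf (j * Real.log 2)
    rw [show (j : ℝ) * Real.log 2 + Real.log 2 = ((j + 1 : ℕ) : ℝ) * Real.log 2 by
      push_cast; ring] at this
    simp only [hI]
    rw [this]
    ring
  have hanti : Antitone I := antitone_nat_of_succ_le fun j => by
    have : 0 ≤ displacement μ (arcAverage f (j * Real.log 2)) (uSL 1) :=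
      integral_nonneg fun x => sq_nonneg _
    linarith [hstep j]
  have hbdd : BddBelow (range I) :=
    ⟨0, by rintro _ ⟨j, rfl⟩; exact integral_nonneg fun x => sq_nonneg _⟩
  have ht := tendsto_atTop_ciInf hanti hbdd
  have := (ht.sub (ht.comp (tendsto_add_atTop_nat 1))).const_mul 4
  simp only [sub_self, mul_zero] at this
  exact this.congr fun j => (hstep j).symm

variable [SecondCountableTopology X]

/-- A family of translates of `f` which all have the integral `c` has on average the
integral `c`. -/
lemma integral_intervalIntegral_smul (ν : Measure X) [IsFiniteMeasure ν] {f : X → ℝ}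
    (hf : Continuous f) {γ : ℝ → SL2R} (hγ : Continuous γ) {c : ℝ}
    (hc : ∀ s, ∫ x, f (γ s • x) ∂ν = c) :
    ∫ x, (∫ s in (0 : ℝ)..1, f (γ s • x)) ∂ν = c := by
  obtain ⟨C, hC⟩ := exists_forall_abs_le hf
  rw [← intervalIntegral_integral_swap]
  · simp [hc]
  · have hcont : Continuous (Function.uncurry fun (s : ℝ) (x : X) => f (γ s • x)) := by
      simp only [Function.uncurry_def]
      fun_prop
    have : IsFiniteMeasure (volume.restrict (uIoc (0 : ℝ) 1)) :=
      ⟨by simp [uIoc_of_le]⟩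
    exact Integrable.of_bound hcont.aestronglyMeasurable C (Eventually.of_forall fun z => hC _)

lemma integral_arcAverage (μ : Measure X) [IsFiniteMeasure μ] [SMulInvariantMeasure SL2R X μ]
    {f : X → ℝ} (hf : Continuous f) (t : ℝ) :
    ∫ x, arcAverage f t x ∂μ = ∫ x, f x ∂μ := by
  have hu := continuous_uSL
  have hγ : Continuous fun s : ℝ => dSL t * uSL s := by fun_prop
  simp only [arcAverage, ← mul_smul]
  exact integral_intervalIntegral_smul μ hf hγ fun s =>
    integral_smul_eq_self (μ := μ) f (g := dSL t * uSL s)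

/-- The arc averages converge uniformly to the space average. -/
theorem tendstoUniformly_arcAverage {K : Type*} [TopologicalSpace K] [Group K] [MulAction K X]
    [ContinuousSMul K X] [SMulCommClass SL2R K X]
    (hopen : ∀ x : X, ∀ W ∈ 𝓝 (1 : SL2R), ∀ V ∈ 𝓝 (1 : K),
      {y | ∃ g ∈ W, ∃ k ∈ V, y = g • k • x} ∈ 𝓝 x)
    (hconst : ∀ F : X → ℝ, Continuous F → (∀ (g : SL2R) x, F (g • x) = F x) → ∀ x y, F x = F y)
    (μ : Measure X) [IsProbabilityMeasure μ] [SMulInvariantMeasure SL2R X μ] [μ.IsOpenPosMeasure]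
    {f : X → ℝ} (hf : Continuous f) :
    TendstoUniformly (fun j : ℕ => arcAverage f (j * Real.log 2)) (fun _ => ∫ x, f x ∂μ)
      atTop := by
  obtain ⟨C, hC⟩ := exists_forall_abs_le hf
  let A (j : ℕ) : BoundedContinuousFunction X ℝ :=
    BoundedContinuousFunction.mkOfCompact ⟨_, continuous_arcAverage hf (j * Real.log 2)⟩
  have hAC (j : ℕ) (x : X) : |A j x| ≤ C := abs_arcAverage_le hC _ x
  have hA (j : ℕ) : ⇑(A j) = arcAverage f (j * Real.log 2) := rfl
  have hlog : 0 ≤ Real.log 2 := (Real.log_pos one_lt_two).le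
  have hequi : Equicontinuous fun j : ℕ => ⇑(A j) :=
    equicontinuous_arcAverage hopen hf fun j => by positivity
  have hK : IsCompact (closure (range A)) := by
    refine BoundedContinuousFunction.arzela_ascoli (Icc (-C) C) isCompact_Icc _ ?_ ?_
    · rintro _ x ⟨j, rfl⟩
      exact abs_le.1 (hAC j x)
    · intro x U hU
      filter_upwards [hequi x U hU] with y hy
      rintro ⟨_, j, rfl⟩
      exact hy j
  suffices h : Tendsto A atTop (𝓝 (BoundedContinuousFunction.const X (∫ x, f x ∂μ))) from
    BoundedContinuousFunction.tendsto_iff_tendstoUniformly.1 h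
  refine hK.tendsto_nhds_of_unique_mapClusterPt
    (Eventually.of_forall fun j => subset_closure (mem_range_self j)) fun Φ _ hΦ => ?_
  obtain ⟨ψ, hψ, hlim⟩ := hΦ.tendsto_subseq
  have hpt (x : X) : Tendsto (fun n => A (ψ n) x) atTop (𝓝 (Φ x)) :=
    (BoundedContinuousFunction.tendsto_iff_tendstoUniformly.1 hlim).tendsto_at x
  have hint : ∫ x, Φ x ∂μ = ∫ x, f x ∂μ := by
    refine tendsto_nhds_unique (tendsto_integral_of_dominated_convergence (fun _ => C)
      (fun n => (A (ψ n)).continuous.aestronglyMeasurable) (integrable_const C)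
      (fun n => Eventually.of_forall fun x => hAC _ x) (Eventually.of_forall hpt)) ?_
    simp only [hA, integral_arcAverage μ hf]
    exact tendsto_const_nhds
  have hdisp : displacement μ Φ (uSL 1) = 0 := by
    have h1 : Tendsto (fun n => displacement μ (A (ψ n)) (uSL 1)) atTop
        (𝓝 (displacement μ Φ (uSL 1))) := by
      refine tendsto_integral_of_dominated_convergence (fun _ => (2 * C) ^ 2)
        (fun n => ?_) (integrable_const _) (fun n => Eventually.of_forall fun x => ?_)
        (Eventually.of_forall fun x => ((hpt _).sub (hpt _)).pow 2)
      · have : Continuous fun x => (A (ψ n) (uSL 1 • x) - A (ψ n) x) ^ 2 := by fun_prop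
        exact this.aestronglyMeasurable
      · rw [norm_pow]
        gcongr
        have := abs_sub (A (ψ n) (uSL 1 • x)) (A (ψ n) x)
        rw [Real.norm_eq_abs]
        linarith [hAC (ψ n) x, hAC (ψ n) (uSL 1 • x)]
    exact tendsto_nhds_unique h1 ((tendsto_displacement_arcAverage μ hf).comp hψ.tendsto_atTop)
  have hinv := invariant_of_uSL_one_invariant μ Φ.continuous
    (eq_of_displacement_eq_zero μ Φ.continuous hdisp)
  have hΦc := hconst Φ Φ.continuous hinv
  ext x
  rw [BoundedContinuousFunction.const_apply, ← hint]
  simp only [fun y => hΦc y x, integral_const, probReal_univ, one_smul]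

variable {K : Type*} [TopologicalSpace K] [Group K] [MulAction K X]
    [ContinuousSMul K X] [SMulCommClass SL2R K X]

/-- Unique ergodicity of the horocycle flow. -/
theorem eq_of_uSL_invariant [T2Space X]
    (hopen : ∀ x : X, ∀ W ∈ 𝓝 (1 : SL2R), ∀ V ∈ 𝓝 (1 : K),
      {y | ∃ g ∈ W, ∃ k ∈ V, y = g • k • x} ∈ 𝓝 x)
    (hconst : ∀ F : X → ℝ, Continuous F → (∀ (g : SL2R) x, F (g • x) = F x) → ∀ x y, F x = F y)
    (μ : Measure X) [IsProbabilityMeasure μ] [SMulInvariantMeasure SL2R X μ] [μ.IsOpenPosMeasure]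
    (ν : Measure X) [IsProbabilityMeasure ν]
    (hν : ∀ s, Measure.map (fun x => uSL s • x) ν = ν) : ν = μ := by
  refine ext_of_forall_integral_eq_of_IsFiniteMeasure fun f => ?_
  have hf := f.continuous
  have hinv (s : ℝ) : ∫ x, f (uSL s • x) ∂ν = ∫ x, f x ∂ν := by
    conv_rhs => rw [← hν s]
    exact (integral_map (measurable_const_smul (uSL s)).aemeasurable
      hf.aestronglyMeasurable).symm
  have hmean (t : ℝ) : ∫ x, arcAverage f t (dSL (-t) • x) ∂ν = ∫ x, f x ∂ν := by
    have hu := continuous_uSL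
    simp only [arcAverage_eq, ← mul_smul, ← dSL_add, add_neg_cancel, dSL_zero, mul_one]
    exact integral_intervalIntegral_smul ν hf (by fun_prop) fun s => hinv _
  have hlim := tendstoUniformly_arcAverage hopen hconst μ hf
  refine eq_of_forall_dist_le fun ε hε => ?_
  obtain ⟨j, hj⟩ := (Metric.tendstoUniformly_iff.1 hlim ε hε).exists
  have hc : Continuous fun x => arcAverage f (j * Real.log 2) (dSL (-(j * Real.log 2)) • x) := by
    have := continuous_arcAverage hf (j * Real.log 2)
    fun_prop
  rw [← hmean (j * Real.log 2), dist_eq_norm]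
  have := norm_integral_le_of_norm_le_const (μ := ν) (C := ε)
    (f := fun x => arcAverage f (j * Real.log 2) (dSL (-(j * Real.log 2)) • x) - ∫ x, f x ∂μ)
    (Eventually.of_forall fun x => by
      rw [← dist_eq_norm, dist_comm]; exact (hj _).le)
  rw [integral_sub (integrable_of_continuous ν hc) (integrable_const _)] at this
  simpa using this

/-- Minimality of the horocycle flow. -/
theorem dense_range_uSL_smul [T2Space X]
    (hopen : ∀ x : X, ∀ W ∈ 𝓝 (1 : SL2R), ∀ V ∈ 𝓝 (1 : K),
      {y | ∃ g ∈ W, ∃ k ∈ V, y = g • k • x} ∈ 𝓝 x)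
    (hconst : ∀ F : X → ℝ, Continuous F → (∀ (g : SL2R) x, F (g • x) = F x) → ∀ x y, F x = F y)
    (μ : Measure X) [IsProbabilityMeasure μ] [SMulInvariantMeasure SL2R X μ] [μ.IsOpenPosMeasure]
    (x : X) : Dense (range fun s : ℝ => uSL s • x) := by
  by_contra hd
  obtain ⟨y, hy⟩ : ∃ y, y ∉ closure (range fun s : ℝ => uSL s • x) := by
    simpa [Dense] using hd
  obtain ⟨f, hf0, hf1, hfI⟩ := exists_continuous_zero_one_of_isClosed
    (isClosed_closure (s := range fun s : ℝ => uSL s • x)) (isClosed_singleton (x := y))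
    (disjoint_singleton_right.2 hy)
  have hpos : 0 < ∫ x, f x ∂μ :=
    (f.continuous.integral_pos_of_hasCompactSupport_nonneg_nonzero
      (HasCompactSupport.of_compactSpace _) (fun x => (hfI x).1) (x := y) (by simp [hf1 rfl]))
  have hlim := tendstoUniformly_arcAverage hopen hconst μ f.continuous
  obtain ⟨j, hj⟩ := (Metric.tendstoUniformly_iff.1 hlim _ hpos).exists
  have h0 : arcAverage f (j * Real.log 2) (dSL (-(j * Real.log 2)) • x) = 0 := by
    simp only [arcAverage_eq, ← mul_smul, ← dSL_add, add_neg_cancel, dSL_zero, mul_one]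
    have (s : ℝ) : f (uSL s • x) = 0 := hf0 (subset_closure (mem_range_self s))
    simp [this]
  have := hj (dSL (-(j * Real.log 2)) • x)
  rw [h0, Real.dist_eq, sub_zero, abs_of_pos hpos] at this
  exact lt_irrefl _ this

end Convergence

section CosetSpace

open scoped Pointwise

variable {H : Type*} [Group H] (Γ : Subgroup H)

@[simp]
lemma rightMulQuot_mk (g x : H) :
    rightMulQuot Γ g (Quotient.mk (rightRel Γ) x) = Quotient.mk (rightRel Γ) (x * g) := rfl

lemma mk_subgroup_smul (γ : Γ) (x : H) :
    Quotient.mk (rightRel Γ) (γ • x) = Quotient.mk (rightRel Γ) x :=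
  Quotient.sound ⟨γ, rfl⟩

/-- The action of a group on the coset space `Γ\H` by inverse right translations along a
homomorphism. -/
@[reducible]
def translationAction {L : Type*} [Group L] (φ : L →* H) :
    MulAction L (Quotient (rightRel Γ)) where
  smul g := rightMulQuot Γ (φ g)⁻¹
  one_smul := by
    rintro ⟨x⟩
    change Quotient.mk (rightRel Γ) (x * (φ 1)⁻¹) = Quotient.mk (rightRel Γ) x
    simp
  mul_smul g h := by
    rintro ⟨x⟩
    change Quotient.mk (rightRel Γ) (x * (φ (g * h))⁻¹) =
      Quotient.mk (rightRel Γ) (x * (φ h)⁻¹ * (φ g)⁻¹)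
    simp [mul_assoc]

variable [TopologicalSpace H]

lemma countable_of_discrete [SecondCountableTopology H] [DiscreteTopology Γ] : Countable Γ :=
  TopologicalSpace.separableSpace_iff_countable.1 inferInstance

variable [IsTopologicalGroup H]

lemma isOpenQuotientMap_mk_rightRel : IsOpenQuotientMap (Quotient.mk (rightRel Γ)) :=
  MulAction.isOpenQuotientMap_quotientMk (Γ := Γ) (T := H)

lemma continuousSMul_translationAction {L : Type*} [Group L] [TopologicalSpace L] {φ : L →* H}
    (hφ : Continuous φ) :
    letI := translationAction Γ φ
    ContinuousSMul L (Quotient (rightRel Γ)) := by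
  let := translationAction Γ φ
  refine ⟨((IsOpenQuotientMap.id.prodMap
    (isOpenQuotientMap_mk_rightRel Γ)).continuous_comp_iff).1 ?_⟩
  have h := (isOpenQuotientMap_mk_rightRel Γ).continuous
  change Continuous fun z : L × H => Quotient.mk (rightRel Γ) (z.2 * (φ z.1)⁻¹)
  fun_prop

lemma t2Space_rightRel [T2Space H] [LocallyCompactSpace H] [DiscreteTopology Γ] :
    T2Space (Quotient (rightRel Γ)) :=
  haveI := Γ.properlyDiscontinuousSMul_of_tendsto_cofinite
    (Γ.tendsto_coe_cofinite_of_discrete (isDiscrete_iff_discreteTopology.2 inferInstance))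
  t2Space_of_properlyDiscontinuousSMul_of_t2Space (Γ := Γ) (T := H)

lemma exists_isCompact_image_mk [LocallyCompactSpace H] [CompactSpace (Quotient (rightRel Γ))] :
    ∃ K : Set H, IsCompact K ∧ ∀ x, ∃ γ : Γ, γ • x ∈ K := by
  choose N hN hxN using fun x : H => exists_compact_mem_nhds x
  have hπ := isOpenQuotientMap_mk_rightRel Γ
  obtain ⟨t, -, ht⟩ := (isCompact_univ (X := Quotient (rightRel Γ))).elim_nhds_subcover
    (fun p => Quotient.mk (rightRel Γ) '' N p.out) (fun p _ => by
      have := hπ.isOpenMap.image_mem_nhds (hxN p.out)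
      rwa [Quotient.out_eq] at this)
  refine ⟨⋃ p ∈ t, N p.out, t.isCompact_biUnion fun p _ => hN _, fun x => ?_⟩
  obtain ⟨p, hp, y, hy, hyx⟩ : ∃ p ∈ t, ∃ y ∈ N p.out,
      Quotient.mk (rightRel Γ) y = Quotient.mk (rightRel Γ) x := by
    simpa using ht (mem_univ (Quotient.mk (rightRel Γ) x))
  obtain ⟨γ, rfl⟩ : ∃ γ : Γ, γ • x = y := Quotient.exact hyx
  exact ⟨γ, mem_biUnion hp hy⟩

variable [SecondCountableTopology H]

lemma secondCountableTopology_rightRel : SecondCountableTopology (Quotient (rightRel Γ)) :=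
  ContinuousConstSMul.secondCountableTopology (Γ := Γ) (T := H)

variable [MeasurableSpace H] [BorelSpace H]

/-- A discrete subgroup of a second countable group has a strict measurable fundamental domain. -/
lemma exists_measurable_fundamental_set [DiscreteTopology Γ] :
    ∃ D : Set H, MeasurableSet D ∧ ∀ x, ∃! γ : Γ, γ • x ∈ D := by
  have := countable_of_discrete Γ
  obtain ⟨O, hO, hOΓ⟩ : ∃ O ∈ 𝓝 (1 : H), ∀ γ : Γ, (γ : H) ∈ O → γ = 1 := by
    have h1 : ({1} : Set Γ) ∈ 𝓝 (1 : Γ) := (isOpen_discrete _).mem_nhds rfl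
    obtain ⟨O, hO, hsub⟩ := (mem_nhds_subtype _ _ _).1 h1
    exact ⟨O, hO, fun γ hγ => hsub hγ⟩
  obtain ⟨V, hV, hVO⟩ : ∃ V ∈ 𝓝 (1 : H), ∀ a ∈ V, ∀ b ∈ V, a / b ∈ O := exists_nhds_split_inv hO
  obtain ⟨W, hWV, hW, h1W⟩ := mem_nhds_iff.1 hV
  let U (i : ℕ) : Set H := {x | x * (TopologicalSpace.denseSeq H i)⁻¹ ∈ W}
  have hUo (i : ℕ) : IsOpen (U i) := hW.preimage (continuous_mul_const _)
  have hUcov (x : H) : ∃ i, x ∈ U i := by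
    have ho : IsOpen {y : H | x * y⁻¹ ∈ W} := hW.preimage (by fun_prop)
    obtain ⟨_, hy, i, rfl⟩ := (TopologicalSpace.denseRange_denseSeq H).inter_open_nonempty _ ho
      ⟨x, by simpa using h1W⟩
    exact ⟨i, hy⟩
  have hUinj (i : ℕ) (γ δ : Γ) (x : H) (hγ : γ • x ∈ U i) (hδ : δ • x ∈ U i) : γ = δ := by
    have := hVO _ (hWV hγ) _ (hWV hδ)
    refine mul_inv_eq_one.1 (hOΓ (γ * δ⁻¹) ?_)
    convert this using 1
    simp [Subgroup.smul_def, div_eq_mul_inv, mul_assoc]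
  refine ⟨{x | ∃ i, x ∈ U i ∧ ∀ j < i, ∀ γ : Γ, γ • x ∉ U j}, ?_, fun x => ?_⟩
  · have : {x | ∃ i, x ∈ U i ∧ ∀ j < i, ∀ γ : Γ, γ • x ∉ U j} =
        ⋃ i, U i ∩ ⋂ j, ⋂ (_ : j < i), ⋂ γ : Γ, (fun x => γ • x) ⁻¹' (U j)ᶜ := by
      ext x; simp
    rw [this]
    refine MeasurableSet.iUnion fun i => (hUo i).measurableSet.inter (IsClosed.measurableSet ?_)
    exact isClosed_iInter fun j => isClosed_iInter fun _ => isClosed_iInter fun γ =>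
      (hUo j).isClosed_compl.preimage (continuous_const_smul γ)
  · classical
    have hex : ∃ i, ∃ γ : Γ, γ • x ∈ U i := by
      obtain ⟨i, hi⟩ := hUcov x
      exact ⟨i, 1, by simpa using hi⟩
    obtain ⟨γ, hγ⟩ := Nat.find_spec hex
    refine ⟨γ, ⟨_, hγ, fun j hj δ hδ => Nat.find_min hex hj ⟨δ * γ, ?_⟩⟩, ?_⟩
    · rwa [mul_smul]
    · rintro δ ⟨i, hi, hmin⟩
      have hle := Nat.find_min' hex ⟨δ, hi⟩
      rcases hle.lt_or_eq with hlt | heq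
      · refine absurd ?_ (hmin _ hlt (γ * δ⁻¹))
        simpa [mul_smul] using hγ
      · rw [heq] at hγ
        exact hUinj i δ γ x hi hγ

/-- A left Haar measure on `H` induces a probability measure on the compact coset space `Γ\H`
which is invariant under all right translations preserving the Haar measure. -/
theorem exists_probabilityMeasure_rightRel [LocallyCompactSpace H] [DiscreteTopology Γ]
    [CompactSpace (Quotient (rightRel Γ))] (m : Measure H) [m.IsHaarMeasure] :
    ∃ μ : Measure (Quotient (rightRel Γ)), IsProbabilityMeasure μ ∧ μ.IsOpenPosMeasure ∧
      ∀ h : H, MeasurePreserving (· * h) m m → Measure.map (rightMulQuot Γ h) μ = μ := by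
  have := countable_of_discrete Γ
  have : BorelSpace (Quotient (rightRel Γ)) := ⟨rfl⟩
  obtain ⟨D, hD, hDx⟩ := exists_measurable_fundamental_set Γ
  have hfd : IsFundamentalDomain Γ D m := .mk' hD.nullMeasurableSet hDx
  have hπ := isOpenQuotientMap_mk_rightRel Γ
  have hπm : Measurable (Quotient.mk (rightRel Γ)) := hπ.continuous.measurable
  set μ := Measure.map (Quotient.mk (rightRel Γ)) (m.restrict D) with hμ
  have hμB {B : Set (Quotient (rightRel Γ))} (hB : MeasurableSet B) :
      μ B = m (Quotient.mk (rightRel Γ) ⁻¹' B ∩ D) := by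
    rw [hμ, Measure.map_apply hπm hB, Measure.restrict_apply (hπm hB)]
  have hfin : μ univ < ⊤ := by
    obtain ⟨K, hK, hKx⟩ := exists_isCompact_image_mk Γ
    rw [hμB .univ, preimage_univ, univ_inter]
    calc m D ≤ m (⋃ γ : Γ, γ • K ∩ D) := measure_mono fun x hx => by
            obtain ⟨γ, hγ⟩ := hKx x
            exact mem_iUnion.2 ⟨γ⁻¹, mem_smul_set_iff_inv_smul_mem.2 (by simpa using hγ), hx⟩
      _ ≤ ∑' γ : Γ, m (γ • K ∩ D) := measure_iUnion_le _
      _ = m K := (hfd.measure_eq_tsum K).symm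
      _ < ⊤ := hK.measure_lt_top
  have hpos {B : Set (Quotient (rightRel Γ))} (hB : IsOpen B) (hne : B.Nonempty) : μ B ≠ 0 := by
    rw [hμB hB.measurableSet]
    intro h0
    refine (hB.preimage hπ.continuous).measure_ne_zero m (hne.preimage hπ.surjective)
      (hfd.measure_zero_of_invariant _ (fun γ => ?_) h0)
    ext x
    simp [mem_smul_set_iff_inv_smul_mem, mk_subgroup_smul]
  have hinv (h : H) (hh : MeasurePreserving (· * h) m m) :
      Measure.map (rightMulQuot Γ h) μ = μ := by
    have hc : Continuous (rightMulQuot Γ h) :=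
      hπ.continuous_comp_iff.1 (hπ.continuous.comp (continuous_mul_const h))
    ext B hB
    have hfd' : IsFundamentalDomain Γ ((· * h) ⁻¹' D) m :=
      .mk' (hh.measurable hD).nullMeasurableSet fun x => by
        simpa only [mem_preimage, smul_mul_assoc] using hDx (x * h)
    rw [Measure.map_apply hc.measurable hB, hμB (hc.measurable hB), hμB hB,
      ← hh.measure_preimage ((hπm hB).inter hD).nullMeasurableSet, preimage_inter]
    refine hfd.measure_set_eq hfd' (hπm (hc.measurable hB)) fun γ => ?_
    ext x
    simp [mk_subgroup_smul]
  have hne0 : μ univ ≠ 0 := hpos isOpen_univ ⟨Quotient.mk _ 1, trivial⟩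
  refine ⟨(μ univ)⁻¹ • μ, ⟨?_⟩, ⟨fun B hB hne => ?_⟩, fun h hh => ?_⟩
  · simp [ENNReal.inv_mul_cancel hne0 hfin.ne]
  · simp [hpos hB hne, hfin.ne]
  · rw [Measure.map_smul, hinv h hh]

end CosetSpace

section Lattice

/-- Right translations along a homomorphism from `SL(2,ℝ)` preserve left Haar measures. -/
lemma measurePreserving_mul_right_of_SL2R {H : Type*} [Group H] [TopologicalSpace H]
    [IsTopologicalGroup H] [LocallyCompactSpace H] [MeasurableSpace H] [BorelSpace H]
    (m : Measure H) [m.IsHaarMeasure] [m.InnerRegular] (φ : SL2R →* H) (g : SL2R) :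
    MeasurePreserving (· * φ g) m m := by
  refine ⟨(continuous_mul_const _).measurable, ?_⟩
  have hg : g ∈ commutator SL2R := by
    rw [Matrix.SL2.commutator_eq_top (a := (2 : ℝ)) (by norm_num) (by norm_num)]
    trivial
  have hker := Abelianization.commutator_subset_ker
    (Measure.modularCharacter.comp φ).toHomUnits hg
  have h1 : Measure.modularCharacterFun (φ g) = 1 := congrArg Units.val (MonoidHom.mem_ker.1 hker)
  rw [Measure.map_right_mul_eq_modularCharacterFun_smul, h1, one_smul]

instance : T2Space SL2R :=
  haveI : T1Space SL2R := Matrix.SpecialLinearGroup.instT1Space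
  inferInstance

instance : LocallyCompactSpace SL2R :=
  haveI : LocallyCompactSpace (Matrix (Fin 2) (Fin 2) ℝ) :=
    inferInstanceAs (LocallyCompactSpace (Fin 2 → Fin 2 → ℝ))
  (Matrix.SpecialLinearGroup.isClosedEmbedding_val (n := Fin 2) (R := ℝ)).locallyCompactSpace

instance : IsClosed (Subgroup.center SL2R : Set SL2R) := by
  have : (Subgroup.center SL2R : Set SL2R) = ⋂ g : SL2R, {h | g * h = h * g} := by
    ext h
    simp [Subgroup.mem_center_iff]
  rw [this]
  exact isClosed_iInter fun g => isClosed_eq (by fun_prop) (by fun_prop)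

variable {G : Type*} [Group G] [TopologicalSpace G] [IsTopologicalGroup G]
  (Γ : Subgroup (PSL2R × G))

/-- The homomorphism from `SL(2,ℝ)` onto the first factor of `PSL(2,ℝ) × G`. -/
def toFirstFactor (G : Type*) [Group G] : SL2R →* PSL2R × G :=
  (MonoidHom.inl PSL2R G).comp (QuotientGroup.mk' (Subgroup.center SL2R))

lemma translation_locally_open (x : PSL2R × G) {W : Set SL2R} (hW : W ∈ 𝓝 1) {V : Set G}
    (hV : V ∈ 𝓝 1) :
    {y | ∃ g ∈ W, ∃ k ∈ V, y = rightMulQuot Γ (toFirstFactor G g)⁻¹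
      (rightMulQuot Γ (MonoidHom.inr PSL2R G k)⁻¹ (Quotient.mk (rightRel Γ) x))} ∈
      𝓝 (Quotient.mk (rightRel Γ) x) := by
  have hq : (QuotientGroup.mk' (Subgroup.center SL2R) '' W) ∈ 𝓝 (1 : PSL2R) := by
    have := (QuotientGroup.isOpenMap_coe (N := Subgroup.center SL2R)).image_mem_nhds hW
    exact this
  have hprod : (QuotientGroup.mk' (Subgroup.center SL2R) '' W) ×ˢ V ∈ 𝓝 (1 : PSL2R × G) :=
    prod_mem_nhds hq hV
  have hcont : Tendsto (fun y : PSL2R × G => y⁻¹ * x) (𝓝 x) (𝓝 1) := by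
    have : Continuous fun y : PSL2R × G => y⁻¹ * x := by fun_prop
    simpa using this.tendsto x
  refine mem_of_superset
    ((isOpenQuotientMap_mk_rightRel Γ).isOpenMap.image_mem_nhds (hcont hprod)) ?_
  rintro _ ⟨y, ⟨⟨g, hg, hgy⟩, hk⟩, rfl⟩
  refine ⟨g, hg, _, hk, ?_⟩
  simp only [rightMulQuot_mk]
  congr 1
  have h1 : toFirstFactor G g = ((y⁻¹ * x).1, 1) := Prod.ext hgy rfl
  rw [h1]
  ext <;> simp [mul_assoc]

/-- A continuous function invariant under the first factor is constant. -/
lemma eq_of_translation_invariant (hdense : Dense (Prod.snd '' (Γ : Set (PSL2R × G))))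
    {F : Quotient (rightRel Γ) → ℝ} (hF : Continuous F)
    (hinv : ∀ g p, F (rightMulQuot Γ (toFirstFactor G g)⁻¹ p) = F p)
    (p q : Quotient (rightRel Γ)) : F p = F q := by
  have hc : Continuous fun z => F (Quotient.mk (rightRel Γ) z) :=
    hF.comp (isOpenQuotientMap_mk_rightRel Γ).continuous
  have hfst (x y : PSL2R) (k : G) :
      F (Quotient.mk (rightRel Γ) (x, k)) = F (Quotient.mk (rightRel Γ) (y, k)) := by
    obtain ⟨g, hg⟩ := QuotientGroup.mk_surjective (y⁻¹ * x)
    rw [← hinv g (Quotient.mk (rightRel Γ) (x, k)), rightMulQuot_mk]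
    have h1 : toFirstFactor G g = (y⁻¹ * x, 1) := Prod.ext hg rfl
    simp [h1]
  have hone (k : G) :
      F (Quotient.mk (rightRel Γ) (1, k)) = F (Quotient.mk (rightRel Γ) (1, 1)) := by
    have hcl : IsClosed {k : G | F (Quotient.mk (rightRel Γ) (1, k)) =
        F (Quotient.mk (rightRel Γ) (1, 1))} :=
      isClosed_eq (hc.comp (by fun_prop)) continuous_const
    refine closure_minimal ?_ hcl (hdense k)
    rintro _ ⟨γ, hγ, rfl⟩
    have h := mk_subgroup_smul Γ ⟨γ, hγ⟩ 1
    rw [mem_ofPred_eq, hfst 1 γ.1]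
    rw [Subgroup.smul_def, smul_eq_mul, mul_one] at h
    exact congrArg F h
  obtain ⟨⟨x, k⟩, rfl⟩ := Quotient.exists_rep p
  obtain ⟨⟨y, l⟩, rfl⟩ := Quotient.exists_rep q
  rw [hfst x 1, hone k, hfst y 1, hone l]

end Lattice

end Horocycle

theorem horocycle_flow_strictly_ergodic_homogeneous
    {E : Type*} [NormedAddCommGroup E] [NormedSpace ℝ E] [FiniteDimensional ℝ E]
    {G : Type*} [Group G] [TopologicalSpace G] [ChartedSpace E G]
    [LieGroup (modelWithCornersSelf ℝ E) (⊤ : ℕ∞) G] [SecondCountableTopology G]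
    (Γ : Subgroup (PSL2R × G)) [DiscreteTopology Γ]
    [CompactSpace (Quotient (QuotientGroup.rightRel Γ))]
    (hdense : Dense (Prod.snd '' (Γ : Set (PSL2R × G)))) :
    (∀ p : Quotient (QuotientGroup.rightRel Γ),
        Dense (Set.range fun s : ℝ => rightMulQuot Γ (uPSL s, 1) p)) ∧
    (∃! μ : Measure (Quotient (QuotientGroup.rightRel Γ)),
        IsProbabilityMeasure μ ∧
        ∀ s : ℝ, Measure.map (rightMulQuot Γ (uPSL s, 1)) μ = μ) := by
  have : IsTopologicalGroup G :=
    topologicalGroup_of_lieGroup (modelWithCornersSelf ℝ E) (⊤ : ℕ∞)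
  have : T1Space G := ChartedSpace.t1Space E G
  have : LocallyCompactSpace G := ChartedSpace.locallyCompactSpace E G
  have : T2Space (Quotient (rightRel Γ)) := Horocycle.t2Space_rightRel Γ
  have : SecondCountableTopology (Quotient (rightRel Γ)) :=
    Horocycle.secondCountableTopology_rightRel Γ
  have : BorelSpace (Quotient (rightRel Γ)) := ⟨rfl⟩
  let : MeasurableSpace (PSL2R × G) := borel _
  have : BorelSpace (PSL2R × G) := ⟨rfl⟩
  let φ : SL2R →* PSL2R × G := Horocycle.toFirstFactor G
  have hφ : Continuous φ := by
    have : Continuous fun g : SL2R => (QuotientGroup.mk g : PSL2R) := QuotientGroup.continuous_mk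
    exact this.prodMk continuous_const
  let : MulAction SL2R (Quotient (rightRel Γ)) := Horocycle.translationAction Γ φ
  let : MulAction G (Quotient (rightRel Γ)) :=
    Horocycle.translationAction Γ (MonoidHom.inr PSL2R G)
  have : ContinuousSMul SL2R (Quotient (rightRel Γ)) :=
    Horocycle.continuousSMul_translationAction Γ hφ
  have : ContinuousSMul G (Quotient (rightRel Γ)) :=
    Horocycle.continuousSMul_translationAction Γ (φ := MonoidHom.inr PSL2R G)
      (continuous_const.prodMk continuous_id)
  have : SMulCommClass SL2R G (Quotient (rightRel Γ)) := ⟨fun g k p => by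
    obtain ⟨⟨x, l⟩, rfl⟩ := Quotient.exists_rep p
    change Quotient.mk (rightRel Γ) ((x, l) * (1, k)⁻¹ * ((g : PSL2R), 1)⁻¹) =
      Quotient.mk (rightRel Γ) ((x, l) * ((g : PSL2R), 1)⁻¹ * (1, k)⁻¹)
    simp⟩
  obtain ⟨μ, hμ, hμo, hμi⟩ := Horocycle.exists_probabilityMeasure_rightRel Γ
    (Measure.haar : Measure (PSL2R × G))
  have hμS (g : SL2R) : Measure.map (rightMulQuot Γ (φ g)) μ = μ :=
    hμi _ (Horocycle.measurePreserving_mul_right_of_SL2R _ φ g)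
  have : SMulInvariantMeasure SL2R (Quotient (rightRel Γ)) μ := by
    refine ((smulInvariantMeasure_tfae SL2R μ).out 0 5).2 fun g => ?_
    have := hμS g⁻¹
    rwa [map_inv] at this
  have hu (s : ℝ) (p : Quotient (rightRel Γ)) :
      rightMulQuot Γ (uPSL s, 1) p = uSL (-s) • p := by
    change _ = rightMulQuot Γ (φ (uSL (-s)))⁻¹ p
    rw [Horocycle.uSL_neg, map_inv, inv_inv]
    rfl
  have hopen : ∀ x : Quotient (rightRel Γ), ∀ W ∈ nhds (1 : SL2R), ∀ V ∈ nhds (1 : G),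
      {y | ∃ g ∈ W, ∃ k ∈ V, y = g • k • x} ∈ nhds x := by
    rintro ⟨x⟩ W hW V hV
    exact Horocycle.translation_locally_open Γ x hW hV
  have hconst (F : Quotient (rightRel Γ) → ℝ) (hF : Continuous F)
      (hinv : ∀ (g : SL2R) x, F (g • x) = F x) : ∀ x y, F x = F y :=
    Horocycle.eq_of_translation_invariant Γ hdense hF hinv
  refine ⟨fun p => ?_, μ, ⟨hμ, fun s => hμS (uSL s)⟩, fun ν ⟨hν, hνi⟩ => ?_⟩
  · have := Horocycle.dense_range_uSL_smul hopen hconst μ p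
    simp only [hu]
    rwa [← (Equiv.neg ℝ).surjective.range_comp] at this
  · refine Horocycle.eq_of_uSL_invariant hopen hconst μ ν fun s => ?_
    have := hνi (-s)
    simpa only [hu, neg_neg, funext (hu (-s))] using this
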